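/- Elimination of x-dependence in the leading coefficient: let λ₃ ∈ ℝ with |λ₃ − 1| ≤ δ₀ small and d₃ ∈ H(T^∞_ρ × T_ρ) with |d₃|_ρ ≤ δ ≪ min(δ₀, ρ). Define m₃(φ) := ( (2π)^{-1} ∫_T (λ₃ + d₃(φ,x))^{-1/3} dx )^{-3} and α(φ,x) := ∂_x^{-1}[ m₃(φ)^{1/3} (λ₃ + d₃(φ,x))^{-1/3} − 1 ]. Then (λ₃ + d₃(φ,x))(1 + α_x(φ,x))³ = m₃(φ) identically, and the estimates |m₃ − λ₃|_ρ ≤ Cδ and |α|_ρ ≤ Cδ hold. -/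

import Mathlib

open scoped BigOperators Classical

noncomputable def wnorm (η : ℝ) (ℓ : ℕ →₀ ℤ) : ℝ :=
  ∑ i ∈ ℓ.support, ((i : ℝ) + 1) ^ η * |(ℓ i : ℝ)|

noncomputable def wt (η σ : ℝ) (p : (ℕ →₀ ℤ) × ℤ) : ℝ :=
  Real.exp (σ * (wnorm η p.1 + |(p.2 : ℝ)|))

noncomputable def odot (ω : ℕ → ℝ) (ℓ : ℕ →₀ ℤ) : ℝ :=
  ∑ i ∈ ℓ.support, ω i * (ℓ i : ℝ)

/-- realization of `d₃(φ,x)` from its Fourier coefficients, at real points. -/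
noncomputable def realizeFn (dc : (ℕ →₀ ℤ) × ℤ → ℂ) (φ : ℕ → ℝ) (x : ℝ) : ℂ :=
  ∑' p : (ℕ →₀ ℤ) × ℤ,
    dc p * Complex.exp (Complex.I * ((odot φ p.1 + (p.2 : ℝ) * x : ℝ) : ℂ))

/-- `m₃(φ) = ( (2π)⁻¹ ∫_T (λ₃+d₃(φ,x))^{-1/3} dx )^{-3}`. -/
noncomputable def m3fn (lam3 : ℝ) (dc : (ℕ →₀ ℤ) × ℤ → ℂ) (φ : ℕ → ℝ) : ℂ :=
  (((2 * Real.pi : ℝ) : ℂ)⁻¹ *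
      ∫ x in (0 : ℝ)..(2 * Real.pi),
        ((lam3 : ℂ) + realizeFn dc φ x) ^ (-(1 / 3 : ℂ))) ^ (-(3 : ℂ))

/-!
The estimates take place in a Wiener algebra, where Moser's composition lemma says that `f ∘ F` is
of size `|F|ⁿ` when `f` vanishes to order `n` at `0`. The problem is homogeneous under
`(λ₃, d₃) ↦ (tλ₃, td₃)`, so let `λ₃ = 1`. Then `v = (1 + d₃)^{-1/3} - 1` is `O(δ)`, hence so is its
mean `w` in `x`, and `m₃ = (1 + w)^{-3}` is `1 + O(δ)`. As `w` is small, the principal cube root of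
`m₃` is `(1 + w)⁻¹`, and so `m₃^{1/3} (1 + d₃)^{-1/3} - 1 = (1 + w)⁻¹ (1 + v) - 1` is `O(δ)` and has
mean zero. It is therefore `α_x` for an `α` that is no larger, since `∂ₓ⁻¹` divides the Fourier
coefficients by integers. The conjugation identity is a cancellation of cubes.
-/

open Filter Topology

lemma ofReal_mul_cpow {t : ℝ} (ht : 0 < t) (z a : ℂ) :
    ((t : ℂ) * z) ^ a = (t : ℂ) ^ a * z ^ a := by
  obtain rfl | hz := eq_or_ne z 0
  · obtain rfl | ha := eq_or_ne a 0 <;> simp [*]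
  have ht' : (t : ℂ) ≠ 0 := Complex.ofReal_ne_zero.2 ht.ne'
  rw [Complex.cpow_def_of_ne_zero (mul_ne_zero ht' hz), Complex.cpow_def_of_ne_zero ht',
    Complex.cpow_def_of_ne_zero hz, ← Complex.exp_add, Complex.log_ofReal_mul ht hz,
    Complex.ofReal_log ht.le, add_mul]

lemma eventually_cpow_cpow (a b : ℂ) : ∀ᶠ z in 𝓝 (1 : ℂ), (z ^ a) ^ b = z ^ (a * b) := by
  have hcont : ContinuousAt (fun z : ℂ => (Complex.log z * a).im) 1 :=
    Complex.continuous_im.continuousAt.comp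
      ((continuousAt_clog Complex.one_mem_slitPlane).mul continuousAt_const)
  have hmem : Set.Ioo (-Real.pi) Real.pi ∈ 𝓝 (Complex.log 1 * a).im := by
    simpa using Ioo_mem_nhds (neg_neg_of_pos Real.pi_pos) Real.pi_pos
  filter_upwards [hcont hmem] with z hz
  exact (Complex.cpow_mul b hz.1 hz.2.le).symm

lemma ofReal_add_ne_zero_of_norm_lt {t : ℝ} {z : ℂ} (hz : ‖z‖ < t) : (t : ℂ) + z ≠ 0 := fun h => by
  rw [← norm_neg, ← eq_neg_of_add_eq_zero_left h, Complex.norm_real] at hz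
  exact hz.not_ge (Real.le_norm_self t)

lemma mul_cube_cpow_third {w : ℂ} (hw : w ≠ 0) (m : ℂ) :
    w * (m ^ ((1 : ℂ) / 3) * w ^ (-(1 / 3 : ℂ))) ^ 3 = m := by
  rw [mul_pow, Complex.cpow_neg, inv_pow, one_div, Complex.cpow_ofNat_inv_pow,
    Complex.cpow_ofNat_inv_pow, mul_left_comm, mul_inv_cancel₀ hw, mul_one]

/-- The data of a weighted Wiener algebra: unimodular functions `char k` on `X`, multiplicative in
the frequency `k`, together with a submultiplicative weight on the frequencies. -/
structure WeightedCharacters (Γ X : Type*) [AddMonoid Γ] where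
  weight : Γ → ℝ
  char : Γ → X → ℂ
  weight_zero : weight 0 = 1
  one_le_weight : ∀ k, 1 ≤ weight k
  weight_add_le : ∀ k l, weight (k + l) ≤ weight k * weight l
  char_zero : ∀ x, char 0 x = 1
  char_add : ∀ k l x, char (k + l) x = char k x * char l x
  norm_char : ∀ k x, ‖char k x‖ = 1

namespace WeightedCharacters

variable {Γ Δ X Y : Type*} [AddMonoid Γ] [AddMonoid Δ]

/-- `F` is the sum of the series `∑ c k • char k`, whose weighted `ℓ¹` norm is finite. -/
structure HasFourierSeries (W : WeightedCharacters Γ X) (F : X → ℂ) (c : Γ → ℂ) : Prop where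
  summable : Summable fun k => W.weight k * ‖c k‖
  hasSum : ∀ x, HasSum (fun k => c k * W.char k x) (F x)

/-- Membership of `F` in the Wiener algebra together with `|F| ≤ M`. The Fourier coefficients are
existentially quantified, so that their uniqueness never has to be discussed. -/
def NormLE (W : WeightedCharacters Γ X) (F : X → ℂ) (M : ℝ) : Prop :=
  ∃ c, W.HasFourierSeries F c ∧ ∑' k, W.weight k * ‖c k‖ ≤ M

section Algebra

variable {W : WeightedCharacters Γ X} {F G : X → ℂ} {M N : ℝ}

lemma weight_pos (W : WeightedCharacters Γ X) (k : Γ) : 0 < W.weight k :=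
  one_pos.trans_le (W.one_le_weight k)

lemma weight_mul_norm_nonneg (W : WeightedCharacters Γ X) (k : Γ) (z : ℂ) :
    0 ≤ W.weight k * ‖z‖ :=
  mul_nonneg (W.weight_pos k).le (norm_nonneg z)

lemma norm_le_weight_mul_norm (W : WeightedCharacters Γ X) (k : Γ) (z : ℂ) :
    ‖z‖ ≤ W.weight k * ‖z‖ :=
  le_mul_of_one_le_left (norm_nonneg z) (W.one_le_weight k)

lemma norm_mul_char (W : WeightedCharacters Γ X) (z : ℂ) (k : Γ) (x : X) :
    ‖z * W.char k x‖ = ‖z‖ := by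
  rw [norm_mul, W.norm_char, mul_one]

lemma summable_norm_of_summable_weight {ι : Type*} {c : ι → ℂ} {g : ι → Γ}
    (h : Summable fun i => W.weight (g i) * ‖c i‖) : Summable fun i => ‖c i‖ :=
  h.of_nonneg_of_le (fun _ => norm_nonneg _) fun _ => W.norm_le_weight_mul_norm _ _

lemma summable_mul_char {ι : Type*} {c : ι → ℂ} {g : ι → Γ}
    (h : Summable fun i => W.weight (g i) * ‖c i‖) (x : X) :
    Summable fun i => c i * W.char (g i) x :=
  .of_norm <| by simpa only [norm_mul_char] using summable_norm_of_summable_weight h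

lemma hasSum_ite_mul_char [DecidableEq Γ] (W : WeightedCharacters Γ X) (a : ℂ) (x : X) :
    HasSum (fun k => (if k = 0 then a else 0) * W.char k x) a := by
  simpa [W.char_zero] using
    hasSum_single (f := fun k => (if k = 0 then a else 0) * W.char k x) 0 fun k hk => by simp [hk]

lemma NormLE.mono (h : W.NormLE F M) (hMN : M ≤ N) : W.NormLE F N :=
  h.imp fun _ hc => ⟨hc.1, hc.2.trans hMN⟩

lemma NormLE.nonneg (h : W.NormLE F M) : 0 ≤ M := by
  obtain ⟨c, -, hM⟩ := h
  exact (tsum_nonneg fun k => W.weight_mul_norm_nonneg k (c k)).trans hM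

lemma NormLE.norm_apply_le (h : W.NormLE F M) (x : X) : ‖F x‖ ≤ M := by
  obtain ⟨c, hc, hM⟩ := h
  rw [← (hc.hasSum x).tsum_eq]
  refine (tsum_of_norm_bounded hc.summable.hasSum fun k => ?_).trans hM
  rw [norm_mul_char]
  exact W.norm_le_weight_mul_norm k (c k)

-- Regrouping the terms of equal frequency turns the family into a Fourier series.
lemma NormLE.of_hasSum {ι : Type*} {c : ι → ℂ} {g : ι → Γ}
    (hs : Summable fun i => W.weight (g i) * ‖c i‖) (hM : ∑' i, W.weight (g i) * ‖c i‖ ≤ M)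
    (hF : ∀ x, HasSum (fun i => c i * W.char (g i) x) (F x)) : W.NormLE F M := by
  have hfiber := hs.hasSum.tsum_fiberwise g
  have hle : ∀ k, W.weight k * ‖∑' i : g ⁻¹' {k}, c i‖ ≤
      ∑' i : g ⁻¹' {k}, W.weight (g i) * ‖c i‖ := fun k => by
    have hconst : ∀ i : g ⁻¹' {k}, W.weight (g i) * ‖c i‖ = W.weight k * ‖c i‖ :=
      fun i => by rw [show g i = k from i.2]
    rw [tsum_congr hconst, tsum_mul_left]
    exact mul_le_mul_of_nonneg_left
      (norm_tsum_le_tsum_norm ((summable_norm_of_summable_weight hs).subtype _)) (W.weight_pos k).le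
  have hsum : Summable fun k => W.weight k * ‖∑' i : g ⁻¹' {k}, c i‖ :=
    hfiber.summable.of_nonneg_of_le (fun k => W.weight_mul_norm_nonneg k _) hle
  refine ⟨fun k => ∑' i : g ⁻¹' {k}, c i, ⟨hsum, fun x => ?_⟩,
    ((hsum.tsum_le_tsum hle hfiber.summable).trans hfiber.tsum_eq.le).trans hM⟩
  refine ((hF x).tsum_fiberwise g).congr_fun fun k => ?_
  rw [← tsum_mul_right]
  exact tsum_congr fun i => by rw [show g i = k from i.2]

lemma NormLE.exists_hasSum_of_sub_const [DecidableEq Γ] {a : ℂ}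
    (h : W.NormLE (fun x => F x - a) M) :
    ∃ c : Γ → ℂ, (∀ x, HasSum (fun k => c k * W.char k x) (F x)) ∧
      Summable (fun k => W.weight k * ‖c k - if k = 0 then a else 0‖) ∧
      ∑' k, W.weight k * ‖c k - if k = 0 then a else 0‖ ≤ M := by
  obtain ⟨c, hc, hM⟩ := h
  refine ⟨fun k => c k + if k = 0 then a else 0, fun x => ?_, ?_, ?_⟩
  · simpa only [add_mul, sub_add_cancel] using (hc.hasSum x).add (W.hasSum_ite_mul_char a x)
  · simpa only [add_sub_cancel_right] using hc.summable
  · simpa only [add_sub_cancel_right] using hM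

lemma NormLE.one (W : WeightedCharacters Γ X) : W.NormLE (fun _ => 1) 1 :=
  .of_hasSum (c := fun _ : Unit => 1) (g := fun _ => 0) (hasSum_fintype _).summable
    (by simp [W.weight_zero]) fun x => by simp [W.char_zero]

lemma NormLE.const_mul (a : ℂ) (h : W.NormLE F M) : W.NormLE (fun x => a * F x) (‖a‖ * M) := by
  obtain ⟨c, hc, hM⟩ := h
  have hnorm : ∀ k, W.weight k * ‖a * c k‖ = ‖a‖ * (W.weight k * ‖c k‖) := fun k => by
    rw [norm_mul, mul_left_comm]
  refine ⟨fun k => a * c k, ⟨?_, fun x => ?_⟩, ?_⟩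
  · simpa only [hnorm] using hc.summable.mul_left _
  · simpa only [mul_assoc] using (hc.hasSum x).mul_left a
  · simpa only [hnorm, tsum_mul_left] using mul_le_mul_of_nonneg_left hM (norm_nonneg a)

lemma NormLE.add (hF : W.NormLE F M) (hG : W.NormLE G N) :
    W.NormLE (fun x => F x + G x) (M + N) := by
  obtain ⟨a, ha, hM⟩ := hF
  obtain ⟨b, hb, hN⟩ := hG
  have hle : ∀ k, W.weight k * ‖a k + b k‖ ≤ W.weight k * ‖a k‖ + W.weight k * ‖b k‖ := fun k =>
    (mul_le_mul_of_nonneg_left (norm_add_le _ _) (W.weight_pos k).le).trans_eq (mul_add _ _ _)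
  have hadd := ha.summable.add hb.summable
  have hs : Summable fun k => W.weight k * ‖a k + b k‖ :=
    hadd.of_nonneg_of_le (fun k => W.weight_mul_norm_nonneg k _) hle
  refine ⟨fun k => a k + b k, ⟨hs, fun x => ?_⟩, ?_⟩
  · simpa only [add_mul] using (ha.hasSum x).add (hb.hasSum x)
  · exact ((hs.tsum_le_tsum hle hadd).trans_eq (ha.summable.tsum_add hb.summable)).trans
      (add_le_add hM hN)

lemma NormLE.mul (hF : W.NormLE F M) (hG : W.NormLE G N) :
    W.NormLE (fun x => F x * G x) (M * N) := by
  have hM0 := hF.nonneg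
  obtain ⟨a, ha, hM⟩ := hF
  obtain ⟨b, hb, hN⟩ := hG
  have hprod := ha.summable.mul_of_nonneg hb.summable
    (fun k => W.weight_mul_norm_nonneg k _) (fun k => W.weight_mul_norm_nonneg k _)
  have hle : ∀ q : Γ × Γ, W.weight (q.1 + q.2) * ‖a q.1 * b q.2‖ ≤
      (W.weight q.1 * ‖a q.1‖) * (W.weight q.2 * ‖b q.2‖) := fun q => by
    rw [norm_mul, mul_mul_mul_comm]
    exact mul_le_mul_of_nonneg_right (W.weight_add_le _ _) (by positivity)
  have hs : Summable fun q : Γ × Γ => W.weight (q.1 + q.2) * ‖a q.1 * b q.2‖ :=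
    hprod.of_nonneg_of_le (fun q => W.weight_mul_norm_nonneg _ _) hle
  refine .of_hasSum hs ?_ fun x => ?_
  · refine (hs.tsum_le_tsum hle hprod).trans ?_
    rw [← ha.summable.tsum_mul_tsum hb.summable hprod]
    exact mul_le_mul hM hN (tsum_nonneg fun k => W.weight_mul_norm_nonneg k _) hM0
  · have hterm : ∀ q : Γ × Γ, a q.1 * b q.2 * W.char (q.1 + q.2) x =
        a q.1 * W.char q.1 x * (b q.2 * W.char q.2 x) := fun q => by
      rw [W.char_add, mul_mul_mul_comm]
    have hs' := summable_mul_char hs x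
    simp only [hterm] at hs' ⊢
    exact HasSum.mul (f := fun k => a k * W.char k x) (g := fun k => b k * W.char k x)
      (ha.hasSum x) (hb.hasSum x) hs'

lemma NormLE.pow (h : W.NormLE F M) (n : ℕ) : W.NormLE (fun x => F x ^ n) (M ^ n) := by
  induction n with
  | zero => simpa only [pow_zero] using NormLE.one W
  | succ n ih => simpa only [pow_succ] using ih.mul h

lemma NormLE.tsum {ι : Type*} {F : ι → X → ℂ} {M : ι → ℝ} (h : ∀ i, W.NormLE (F i) (M i))
    (hM : Summable M) : W.NormLE (fun x => ∑' i, F i x) (∑' i, M i) := by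
  choose c hc hcM using h
  have hnorm : Summable fun i => ∑' k, W.weight k * ‖c i k‖ :=
    hM.of_nonneg_of_le (fun i => tsum_nonneg fun k => W.weight_mul_norm_nonneg k _) hcM
  have hs : Summable fun q : ι × Γ => W.weight q.2 * ‖c q.1 q.2‖ :=
    (summable_prod_of_nonneg fun q => W.weight_mul_norm_nonneg _ _).2
      ⟨fun i => (hc i).summable, hnorm⟩
  refine .of_hasSum hs ?_ fun x => ?_
  · rw [hs.tsum_prod]
    exact hnorm.tsum_le_tsum hcM hM
  · have hs' := (summable_mul_char hs x).hasSum
    rwa [(hs'.prod_fiberwise fun i => (hc i).hasSum x).tsum_eq]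

end Algebra

section Composition

lemma exists_normLE_comp {f : ℂ → ℂ} (hf : AnalyticAt ℂ f 0) :
    ∃ K > 0, ∀ᶠ M in 𝓝 (0 : ℝ), ∀ (W : WeightedCharacters Γ X) (F : X → ℂ),
      W.NormLE F M → W.NormLE (fun x => f (F x)) K := by
  obtain ⟨p, R, hp⟩ := hf
  obtain ⟨s, hs0, hsR⟩ := ENNReal.lt_iff_exists_nnreal_btwn.1 hp.r_pos
  have hsum := p.summable_norm_mul_pow (hsR.trans_le hp.r_le)
  refine ⟨∑' n, ‖p n‖ * (s : ℝ) ^ n + 1,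
    add_pos_of_nonneg_of_pos (tsum_nonneg fun n => by positivity) one_pos, ?_⟩
  filter_upwards [Iio_mem_nhds (NNReal.coe_pos.2 (ENNReal.coe_pos.1 hs0))] with M hM W F hF
  have hM0 := hF.nonneg
  have hle : ∀ n, ‖p.coeff n‖ * M ^ n ≤ ‖p n‖ * (s : ℝ) ^ n := fun n => by
    rw [FormalMultilinearSeries.norm_apply_eq_norm_coef]
    gcongr
    exact hM.le
  have hsumM : Summable fun n => ‖p.coeff n‖ * M ^ n :=
    hsum.of_nonneg_of_le (fun n => by positivity) hle
  have hfF : ∀ x, f (F x) = ∑' n, p.coeff n * F x ^ n := fun x => by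
    have hball : F x ∈ Metric.eball (0 : ℂ) R := by
      rw [Metric.mem_eball, edist_zero_right]
      exact (enorm_le_coe.2 ((hF.norm_apply_le x).trans hM.le)).trans_lt hsR
    have h := (hp.hasSum hball).tsum_eq
    simp only [FormalMultilinearSeries.apply_eq_pow_smul_coeff, zero_add, smul_eq_mul] at h
    simpa only [mul_comm] using h.symm
  simp only [hfF]
  exact (NormLE.tsum (fun n => (hF.pow n).const_mul (p.coeff n)) hsumM).mono
    ((hsumM.tsum_le_tsum hle hsum).trans (lt_add_one _).le)

theorem exists_normLE_comp_of_le_analyticOrderAt {f : ℂ → ℂ} (hf : AnalyticAt ℂ f 0) {n : ℕ}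
    (hn : n ≤ analyticOrderAt f 0) :
    ∃ K > 0, ∀ᶠ M in 𝓝 (0 : ℝ), ∀ (W : WeightedCharacters Γ X) (F : X → ℂ),
      W.NormLE F M → W.NormLE (fun x => f (F x)) (K * M ^ n) := by
  obtain ⟨g, hg, hfg⟩ := (natCast_le_analyticOrderAt hf).1 hn
  obtain ⟨r, hr, hball⟩ := Metric.eventually_nhds_iff.1 hfg
  obtain ⟨K, hK, hgF⟩ := exists_normLE_comp (Γ := Γ) (X := X) hg
  refine ⟨K, hK, ?_⟩
  filter_upwards [hgF, Iio_mem_nhds hr] with M hM hMr W F hF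
  have hfactor : ∀ x, f (F x) = g (F x) * F x ^ n := fun x => by
    rw [hball (dist_zero_right (F x) ▸ (hF.norm_apply_le x).trans_lt hMr), sub_zero, smul_eq_mul,
      mul_comm]
  simpa only [hfactor] using (hM W F hF).mul (hF.pow n)

lemma exists_normLE_one_add_cpow_sub_one (a : ℂ) :
    ∃ K > 0, ∀ᶠ M in 𝓝 (0 : ℝ), ∀ (W : WeightedCharacters Γ X) (F : X → ℂ),
      W.NormLE F M → W.NormLE (fun x => (1 + F x) ^ a - 1) (K * M) := by
  have hf : AnalyticAt ℂ (fun z : ℂ => (1 + z) ^ a - 1) 0 :=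
    (AnalyticAt.cpow (by fun_prop) (by fun_prop) (by simp)).sub (by fun_prop)
  have hord : ((1 : ℕ) : ℕ∞) ≤ analyticOrderAt (fun z : ℂ => (1 + z) ^ a - 1) 0 := by
    rw [Nat.cast_one, Order.one_le_iff_ne_zero, hf.analyticOrderAt_ne_zero]
    simp
  simpa only [pow_one] using exists_normLE_comp_of_le_analyticOrderAt hf hord

end Composition

section Circle

/-- The weighted characters of a product, whose Wiener algebra is the (completed) tensor product. -/
def prod (W : WeightedCharacters Γ X) (V : WeightedCharacters Δ Y) :
    WeightedCharacters (Γ × Δ) (X × Y) where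
  weight k := W.weight k.1 * V.weight k.2
  char k p := W.char k.1 p.1 * V.char k.2 p.2
  weight_zero := by simp [W.weight_zero, V.weight_zero]
  one_le_weight k := one_le_mul_of_one_le_of_one_le (W.one_le_weight _) (V.one_le_weight _)
  weight_add_le k l := by
    rw [mul_mul_mul_comm]
    exact mul_le_mul (W.weight_add_le _ _) (V.weight_add_le _ _) (V.weight_pos _).le
      (mul_pos (W.weight_pos _) (W.weight_pos _)).le
  char_zero p := by simp [W.char_zero, V.char_zero]
  char_add k l p := by
    rw [mul_mul_mul_comm]
    exact congrArg₂ (· * ·) (W.char_add _ _ _) (V.char_add _ _ _)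
  norm_char k p := by rw [norm_mul, W.norm_char, V.norm_char, one_mul]

/-- The exponentials `exp (i k t)` with weight `exp (σ |k|)`, describing the functions of one
angle that are analytic on the strip of width `σ`. -/
noncomputable def circle (σ : ℝ) (hσ : 0 ≤ σ) : WeightedCharacters ℤ ℝ where
  weight k := Real.exp (σ * |(k : ℝ)|)
  char k t := Complex.exp (k * t * Complex.I)
  weight_zero := by simp
  one_le_weight k := Real.one_le_exp (by positivity)
  weight_add_le k l := by
    rw [← Real.exp_add, ← mul_add, Int.cast_add]
    gcongr
    exact abs_add_le _ _
  char_zero t := by simp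
  char_add k l t := by
    rw [← Complex.exp_add]
    push_cast
    ring_nf
  norm_char k t := by exact_mod_cast Complex.norm_exp_ofReal_mul_I (k * t)

lemma NormLE.comp_fst {W : WeightedCharacters Γ X} {F : X → ℂ} {M : ℝ} (h : W.NormLE F M)
    (V : WeightedCharacters Δ Y) : (W.prod V).NormLE (fun p => F p.1) M := by
  obtain ⟨c, hc, hM⟩ := h
  have hweight : ∀ k, (W.prod V).weight (k, 0) = W.weight k := fun k => by
    simp [prod, V.weight_zero]
  refine .of_hasSum (c := c) (g := fun k => (k, 0)) ?_ ?_ fun p => ?_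
  · simpa only [hweight] using hc.summable
  · simpa only [hweight] using hM
  · simpa [prod, V.char_zero] using hc.hasSum p.1

/-- The average `(2π)⁻¹ ∫ F(x, t) dt` over the last angle. -/
noncomputable def circleMean (F : X × ℝ → ℂ) (x : X) : ℂ :=
  ((2 * Real.pi : ℝ) : ℂ)⁻¹ * ∫ t in (0 : ℝ)..(2 * Real.pi), F (x, t)

lemma circleMean_fst_mul (a : X → ℂ) (F : X × ℝ → ℂ) (x : X) :
    circleMean (fun p => a p.1 * F p) x = a x * circleMean F x := by
  simp only [circleMean, intervalIntegral.integral_const_mul, mul_left_comm]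

lemma circleMean_one_add {F : X × ℝ → ℂ} {x : X}
    (hF : IntervalIntegrable (fun t => F (x, t)) MeasureTheory.volume 0 (2 * Real.pi)) :
    circleMean (fun p => 1 + F p) x = 1 + circleMean F x := by
  have hpi : ((2 * Real.pi : ℝ) : ℂ) ≠ 0 := Complex.ofReal_ne_zero.2 Real.two_pi_pos.ne'
  simp only [circleMean]
  rw [intervalIntegral.integral_add intervalIntegrable_const hF, intervalIntegral.integral_const,
    sub_zero, Complex.real_smul, mul_one, mul_add, inv_mul_cancel₀ hpi]

lemma integral_circle_char (σ : ℝ) (hσ : 0 ≤ σ) (k : ℤ) :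
    ∫ t in (0 : ℝ)..(2 * Real.pi), (circle σ hσ).char k t =
      if k = 0 then ((2 * Real.pi : ℝ) : ℂ) else 0 := by
  split_ifs with hk
  · simp [circle, hk]
  · have hcomm : ∀ t : ℝ, (circle σ hσ).char k t = Complex.exp (k * Complex.I * t) := fun t => by
      simp only [circle, mul_right_comm]
    have hperiod : Complex.exp (k * Complex.I * (2 * Real.pi : ℝ)) = 1 :=
      Complex.exp_eq_one_iff.2 ⟨k, by push_cast; ring⟩
    simp only [hcomm]
    rw [integral_exp_mul_complex (mul_ne_zero (Int.cast_ne_zero.2 hk) Complex.I_ne_zero), hperiod]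
    simp

variable {W : WeightedCharacters Γ X} {σ : ℝ} {hσ : 0 ≤ σ} {F : X × ℝ → ℂ} {c : Γ × ℤ → ℂ} {M : ℝ}

lemma continuous_prod_circle_char (k : Γ × ℤ) (x : X) :
    Continuous fun t => (W.prod (circle σ hσ)).char k (x, t) := by
  simp only [prod, circle]
  fun_prop

lemma HasFourierSeries.continuous_right (h : (W.prod (circle σ hσ)).HasFourierSeries F c) (x : X) :
    Continuous fun t => F (x, t) := by
  have hF : (fun t => F (x, t)) = fun t => ∑' k, c k * (W.prod (circle σ hσ)).char k (x, t) :=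
    funext fun t => (h.hasSum (x, t)).tsum_eq.symm
  rw [hF]
  exact continuous_tsum (fun k => (continuous_prod_circle_char k x).const_mul (c k))
    (summable_norm_of_summable_weight (g := id) h.summable) fun k t => (norm_mul_char _ _ _ _).le

lemma NormLE.intervalIntegrable_right (h : (W.prod (circle σ hσ)).NormLE F M) (x : X) (a b : ℝ) :
    IntervalIntegrable (fun t => F (x, t)) MeasureTheory.volume a b := by
  obtain ⟨c, hc, -⟩ := h
  exact (hc.continuous_right x).intervalIntegrable a b

lemma HasFourierSeries.circleMean [Countable Γ]
    (h : (W.prod (circle σ hσ)).HasFourierSeries F c) :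
    W.HasFourierSeries (circleMean F) (fun k => c (k, 0)) := by
  have hinj : Function.Injective fun k : Γ => (k, (0 : ℤ)) := Prod.mk_left_injective 0
  refine ⟨?_, fun x => ?_⟩
  · simpa [Function.comp_def, prod, (circle σ hσ).weight_zero] using
      h.summable.comp_injective hinj
  have hint := intervalIntegral.hasSum_integral_of_dominated_convergence
    (μ := MeasureTheory.volume) (a := 0) (b := 2 * Real.pi) (fun k _ => ‖c k‖)
    (fun k => ((continuous_prod_circle_char k x).const_mul (c k)).aestronglyMeasurable)
    (fun k => .of_forall fun t _ => (norm_mul_char _ _ _ _).le)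
    (.of_forall fun t _ => summable_norm_of_summable_weight (g := id) h.summable) (by simp)
    (.of_forall fun t _ => h.hasSum (x, t))
  have hmean := hint.mul_left ((2 * Real.pi : ℝ) : ℂ)⁻¹
  rw [← hinj.hasSum_iff] at hmean
  · refine hmean.congr_fun fun k => ?_
    have hpi : ((2 * Real.pi : ℝ) : ℂ) ≠ 0 := Complex.ofReal_ne_zero.2 Real.two_pi_pos.ne'
    simp only [Function.comp_apply, prod, intervalIntegral.integral_const_mul,
      integral_circle_char, if_true]
    field_simp
  · rintro ⟨k, n⟩ hkn
    have hn : n ≠ 0 := fun hn => hkn ⟨k, by rw [hn]⟩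
    simp [prod, integral_circle_char, hn]

lemma NormLE.circleMean [Countable Γ] (h : (W.prod (circle σ hσ)).NormLE F M) :
    W.NormLE (circleMean F) M := by
  obtain ⟨c, hc, hM⟩ := h
  have hle := tsum_comp_le_tsum_of_inj hc.summable
    (fun k => (W.prod (circle σ hσ)).weight_mul_norm_nonneg k (c k))
    (Prod.mk_left_injective (0 : ℤ))
  refine ⟨_, hc.circleMean, le_trans ?_ (hle.trans hM)⟩
  simp [Function.comp_def, prod, (circle σ hσ).weight_zero]

/-- The Fourier coefficients of the antiderivative `∂ₜ⁻¹ F` of zero mean. Division by zero provides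
the value `0` at the frequencies `(k, 0)`. -/
noncomputable def antiderivCoeff {ι : Type*} (c : ι × ℤ → ℂ) (k : ι × ℤ) : ℂ :=
  c k / (Complex.I * k.2)

lemma norm_antiderivCoeff_le {ι : Type*} (c : ι × ℤ → ℂ) (k : ι × ℤ) :
    ‖antiderivCoeff c k‖ ≤ ‖c k‖ := by
  obtain hk | hk := eq_or_ne k.2 0
  · simp [antiderivCoeff, hk]
  · rw [antiderivCoeff, norm_div, norm_mul, Complex.norm_I, one_mul, Complex.norm_intCast]
    exact div_le_self (norm_nonneg _) (mod_cast Int.one_le_abs hk)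

-- The zero mean is a statement about `∑ c (k, 0) • char k` only, so the series of the mean is
-- subtracted instead of arguing that each `c (k, 0)` vanishes.
lemma HasFourierSeries.hasSum_antiderivCoeff [Countable Γ]
    (h : (W.prod (circle σ hσ)).HasFourierSeries F c)
    (h0 : ∀ x, WeightedCharacters.circleMean F x = 0) (p : X × ℝ) :
    HasSum (fun k => Complex.I * k.2 * antiderivCoeff c k * (W.prod (circle σ hσ)).char k p)
      (F p) := by
  have hinj : Function.Injective fun k : Γ => (k, (0 : ℤ)) := Prod.mk_left_injective 0
  have hmean : HasSum (fun k : Γ × ℤ =>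
      if k.2 = 0 then c k * (W.prod (circle σ hσ)).char k p else 0) 0 := by
    rw [← hinj.hasSum_iff]
    · simpa [Function.comp_def, prod, (circle σ hσ).char_zero, h0] using h.circleMean.hasSum p.1
    · rintro ⟨k, n⟩ hkn
      exact if_neg fun hn => hkn ⟨k, by rw [← hn]⟩
  have hsub := (h.hasSum p).sub hmean
  rw [sub_zero] at hsub
  refine hsub.congr_fun fun k => ?_
  obtain hk | hk := eq_or_ne k.2 0
  · simp [hk]
  · have hk' : Complex.I * (k.2 : ℂ) ≠ 0 := mul_ne_zero Complex.I_ne_zero (Int.cast_ne_zero.2 hk)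
    rw [antiderivCoeff, mul_div_cancel₀ _ hk', if_neg hk, sub_zero]

lemma NormLE.exists_antiderivative [Countable Γ] (h : (W.prod (circle σ hσ)).NormLE F M)
    (h0 : ∀ x, WeightedCharacters.circleMean F x = 0) :
    ∃ a : Γ × ℤ → ℂ, (∀ k, a (k, 0) = 0) ∧
      Summable (fun k => (W.prod (circle σ hσ)).weight k * ‖a k‖) ∧
      ∑' k, (W.prod (circle σ hσ)).weight k * ‖a k‖ ≤ M ∧
      ∀ p, HasSum (fun k => Complex.I * k.2 * a k * (W.prod (circle σ hσ)).char k p) (F p) := by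
  obtain ⟨c, hc, hM⟩ := h
  have hle := fun k => mul_le_mul_of_nonneg_left (norm_antiderivCoeff_le c k)
    ((W.prod (circle σ hσ)).weight_pos k).le
  have hs := hc.summable.of_nonneg_of_le (fun k => weight_mul_norm_nonneg _ k _) hle
  exact ⟨antiderivCoeff c, fun k => by simp [antiderivCoeff], hs,
    (hs.tsum_le_tsum hle hc.summable).trans hM, hc.hasSum_antiderivCoeff h0⟩

end Circle

section Straightening

/-- The `t`-independent leading coefficient `m = ((2π)⁻¹ ∫ (lam + d)^{-1/3} dt)^{-3}` to which
`lam + d` is straightened, with the principal branch of the powers. -/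
noncomputable def leadingConst (lam : ℝ) (d : X × ℝ → ℂ) (x : X) : ℂ :=
  circleMean (fun p => ((lam : ℂ) + d p) ^ (-(1 / 3 : ℂ))) x ^ (-(3 : ℂ))

/-- The derivative `α_t = m^{1/3} (lam + d)^{-1/3} - 1` of the straightening shift `α`. -/
noncomputable def shiftDeriv (lam : ℝ) (d : X × ℝ → ℂ) (p : X × ℝ) : ℂ :=
  leadingConst lam d p.1 ^ ((1 : ℂ) / 3) * ((lam : ℂ) + d p) ^ (-(1 / 3 : ℂ)) - 1

lemma mul_one_add_shiftDeriv_cube {lam : ℝ} {d : X × ℝ → ℂ} {p : X × ℝ}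
    (hp : (lam : ℂ) + d p ≠ 0) :
    ((lam : ℂ) + d p) * (1 + shiftDeriv lam d p) ^ 3 = leadingConst lam d p.1 := by
  rw [shiftDeriv, add_sub_cancel, mul_cube_cpow_third hp]

lemma leadingConst_mul {t : ℝ} (ht : 0 < t) (lam : ℝ) (d : X × ℝ → ℂ) (x : X) :
    leadingConst (t * lam) (fun p => t * d p) x = t * leadingConst lam d x := by
  have hcube : ((t : ℂ) ^ (-(1 / 3 : ℂ))) ^ 3 = (t : ℂ)⁻¹ := by
    rw [Complex.cpow_neg, inv_pow, one_div, Complex.cpow_ofNat_inv_pow]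
  have hinv : ∀ z : ℂ, z ^ (-(3 : ℂ)) = (z ^ 3)⁻¹ := fun z => by
    rw [Complex.cpow_neg, Complex.cpow_ofNat]
  simp only [leadingConst, Complex.ofReal_mul, ← mul_add, ofReal_mul_cpow ht]
  rw [circleMean_fst_mul (fun _ => (t : ℂ) ^ (-(1 / 3 : ℂ))), hinv, hinv, mul_pow, hcube, mul_inv,
    inv_inv]

lemma shiftDeriv_mul {t : ℝ} (ht : 0 < t) (lam : ℝ) (d : X × ℝ → ℂ) :
    shiftDeriv (t * lam) (fun p => t * d p) = shiftDeriv lam d := by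
  have hne : (t : ℂ) ^ (1 / 3 : ℂ) ≠ 0 := by simp [Complex.cpow_eq_zero_iff, ht.ne']
  funext p
  simp only [shiftDeriv, leadingConst_mul ht, Complex.ofReal_mul, ← mul_add, ofReal_mul_cpow ht]
  rw [Complex.cpow_neg (t : ℂ), mul_mul_mul_comm, mul_inv_cancel₀ hne, one_mul]

lemma circleMean_shiftDeriv {lam : ℝ} {d : X × ℝ → ℂ} {x : X}
    (hd : IntervalIntegrable (fun t => shiftDeriv lam d (x, t)) MeasureTheory.volume 0
      (2 * Real.pi))
    (hm : leadingConst lam d x ^ ((1 : ℂ) / 3) *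
      circleMean (fun p => ((lam : ℂ) + d p) ^ (-(1 / 3 : ℂ))) x = 1) :
    circleMean (shiftDeriv lam d) x = 0 := by
  have hone := circleMean_one_add hd
  simp only [shiftDeriv, add_sub_cancel] at hone
  rw [circleMean_fst_mul (fun x => leadingConst lam d x ^ ((1 : ℂ) / 3)), hm] at hone
  exact (left_eq_add.1 hone :)

/-- The deviation `v = (1 + d)^{-1/3} - 1` from `1`, in terms of whose mean `w` everything is
expressed at `lam = 1`: `m = (1 + w)^{-3}` and `1 + α_t = (1 + w)⁻¹ (1 + v)`. -/
noncomputable def invCubeRootSubOne (d : X × ℝ → ℂ) (p : X × ℝ) : ℂ :=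
  (1 + d p) ^ (-(1 / 3 : ℂ)) - 1

variable {W : WeightedCharacters Γ X} {σ : ℝ} {hσ : 0 ≤ σ} {d : X × ℝ → ℂ} {M : ℝ}

lemma circleMean_one_add_cpow
    (hv : (W.prod (circle σ hσ)).NormLE (invCubeRootSubOne d) M) (x : X) :
    circleMean (fun p => (1 + d p) ^ (-(1 / 3 : ℂ))) x =
      1 + circleMean (invCubeRootSubOne d) x := by
  rw [← circleMean_one_add (hv.intervalIntegrable_right x _ _)]
  simp only [invCubeRootSubOne, add_sub_cancel]

lemma leadingConst_one_eq
    (hv : (W.prod (circle σ hσ)).NormLE (invCubeRootSubOne d) M) (x : X) :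
    leadingConst 1 d x = (1 + circleMean (invCubeRootSubOne d) x) ^ (-(3 : ℂ)) := by
  simp only [leadingConst, Complex.ofReal_one, circleMean_one_add_cpow hv]

lemma eventually_one_add_cpow_neg_three_cpow_third :
    ∀ᶠ r in 𝓝 (0 : ℝ), ∀ w : ℂ, ‖w‖ ≤ r →
      1 + w ≠ 0 ∧ ((1 + w) ^ (-(3 : ℂ))) ^ ((1 : ℂ) / 3) = (1 + w) ^ (-1 : ℂ) := by
  obtain ⟨s, hs, hball⟩ := Metric.eventually_nhds_iff.1 (eventually_cpow_cpow (-3) (1 / 3))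
  filter_upwards [Iio_mem_nhds hs, Iio_mem_nhds one_pos] with r hrs hr1 w hw
  refine ⟨by simpa using ofReal_add_ne_zero_of_norm_lt (hw.trans_lt hr1), ?_⟩
  rw [hball (by simpa using hw.trans_lt hrs)]
  norm_num

lemma shiftDeriv_one_eq (hv : (W.prod (circle σ hσ)).NormLE (invCubeRootSubOne d) M) {p : X × ℝ}
    (hroot : ((1 + circleMean (invCubeRootSubOne d) p.1) ^ (-(3 : ℂ))) ^ ((1 : ℂ) / 3) =
      (1 + circleMean (invCubeRootSubOne d) p.1) ^ (-1 : ℂ)) :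
    shiftDeriv 1 d p =
      ((1 + circleMean (invCubeRootSubOne d) p.1) ^ (-1 : ℂ) - 1) + invCubeRootSubOne d p +
        ((1 + circleMean (invCubeRootSubOne d) p.1) ^ (-1 : ℂ) - 1) * invCubeRootSubOne d p := by
  rw [shiftDeriv, leadingConst_one_eq hv, hroot, invCubeRootSubOne, Complex.ofReal_one]
  ring

lemma circleMean_shiftDeriv_one {N : ℝ}
    (hv : (W.prod (circle σ hσ)).NormLE (invCubeRootSubOne d) M)
    (hd : (W.prod (circle σ hσ)).NormLE (shiftDeriv 1 d) N) {x : X}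
    (hne : 1 + circleMean (invCubeRootSubOne d) x ≠ 0)
    (hroot : ((1 + circleMean (invCubeRootSubOne d) x) ^ (-(3 : ℂ))) ^ ((1 : ℂ) / 3) =
      (1 + circleMean (invCubeRootSubOne d) x) ^ (-1 : ℂ)) :
    circleMean (shiftDeriv 1 d) x = 0 := by
  refine circleMean_shiftDeriv (hd.intervalIntegrable_right x _ _) ?_
  rw [leadingConst_one_eq hv, hroot, Complex.ofReal_one, circleMean_one_add_cpow hv,
    Complex.cpow_neg_one, inv_mul_cancel₀ hne]

/-- The conclusions of the straightening of `lam + d`: its leading coefficient `m` satisfies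
`|m - lam| ≤ A`, and `α_t` has zero mean and satisfies `|α_t| ≤ B`. -/
structure StraighteningBounds (W : WeightedCharacters Γ X) (σ : ℝ) (hσ : 0 ≤ σ) (lam : ℝ)
    (d : X × ℝ → ℂ) (A B : ℝ) : Prop where
  normLE_leadingConst_sub : W.NormLE (fun x => leadingConst lam d x - lam) A
  normLE_shiftDeriv : (W.prod (circle σ hσ)).NormLE (shiftDeriv lam d) B
  circleMean_shiftDeriv : ∀ x, circleMean (shiftDeriv lam d) x = 0

lemma StraighteningBounds.mul {lam A B t : ℝ} (h : W.StraighteningBounds σ hσ lam d A B)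
    (ht : 0 < t) :
    W.StraighteningBounds σ hσ (t * lam) (fun p => t * d p) (t * A) B := by
  refine ⟨?_, ?_, ?_⟩
  · simpa only [leadingConst_mul ht, Complex.ofReal_mul, ← mul_sub, Complex.norm_real,
      Real.norm_of_nonneg ht.le] using h.normLE_leadingConst_sub.const_mul (t : ℂ)
  · simpa only [shiftDeriv_mul ht] using h.normLE_shiftDeriv
  · simpa only [shiftDeriv_mul ht] using h.circleMean_shiftDeriv

variable [Countable Γ]

lemma exists_straighteningBounds_of_invCubeRootSubOne :
    ∃ C > 0, ∀ᶠ M in 𝓝 (0 : ℝ), ∀ (W : WeightedCharacters Γ X) (σ : ℝ) (hσ : 0 ≤ σ)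
      (d : X × ℝ → ℂ), (W.prod (circle σ hσ)).NormLE (invCubeRootSubOne d) M →
        W.StraighteningBounds σ hσ 1 d (C * M) (C * M) := by
  obtain ⟨K₃, hK₃, hcube⟩ := exists_normLE_one_add_cpow_sub_one (Γ := Γ) (X := X) (-(3 : ℂ))
  obtain ⟨K₁, hK₁, hinv⟩ := exists_normLE_one_add_cpow_sub_one (Γ := Γ) (X := X) (-1)
  refine ⟨K₃ + (2 * K₁ + 1), by positivity, ?_⟩
  filter_upwards [hcube, hinv, eventually_one_add_cpow_neg_three_cpow_third,
    Iic_mem_nhds one_pos] with M hcube hinv hroot (hM1 : M ≤ 1) W σ hσ d hv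
  have hM := hv.nonneg
  have hw := hv.circleMean
  have hroot := fun x => hroot _ (hw.norm_apply_le x)
  have hm : W.NormLE (fun x => leadingConst 1 d x - (1 : ℝ)) (K₃ * M) := by
    simpa only [leadingConst_one_eq hv, Complex.ofReal_one] using hcube W _ hw
  have hi := (hinv W _ hw).comp_fst (circle σ hσ)
  have hshift : (W.prod (circle σ hσ)).NormLE (shiftDeriv 1 d)
      (K₁ * M + M + K₁ * M * M) := by
    simpa only [← shiftDeriv_one_eq hv (hroot _).2] using (hi.add hv).add (hi.mul hv)
  have hK₁M : K₁ * M * M ≤ K₁ * M := mul_le_of_le_one_right (by positivity) hM1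
  have hK₃M : 0 ≤ K₃ * M := by positivity
  exact ⟨hm.mono (by nlinarith), hshift.mono (by linarith), fun x =>
    circleMean_shiftDeriv_one hv hshift (hroot x).1 (hroot x).2⟩

lemma exists_straighteningBounds_one :
    ∃ C > 0, ∀ᶠ δ in 𝓝 (0 : ℝ), ∀ (W : WeightedCharacters Γ X) (σ : ℝ) (hσ : 0 ≤ σ)
      (d : X × ℝ → ℂ), (W.prod (circle σ hσ)).NormLE d δ →
        W.StraighteningBounds σ hσ 1 d (C * δ) (C * δ) := by
  obtain ⟨K, hK, hroot⟩ :=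
    exists_normLE_one_add_cpow_sub_one (Γ := Γ × ℤ) (X := X × ℝ) (-(1 / 3 : ℂ))
  obtain ⟨C, hC, hbounds⟩ := exists_straighteningBounds_of_invCubeRootSubOne (Γ := Γ) (X := X)
  have hlim : Tendsto (K * ·) (𝓝 0) (𝓝 0) := by
    simpa using (continuous_const_mul K).tendsto 0
  refine ⟨C * K, by positivity, ?_⟩
  filter_upwards [hroot, hlim.eventually hbounds] with δ hroot hbounds W σ hσ d hd
  simpa only [mul_assoc] using hbounds W σ hσ d (hroot _ d hd)

theorem exists_straighteningBounds :
    ∃ C > 0, ∃ ε > 0, ∀ (W : WeightedCharacters Γ X) (σ : ℝ) (hσ : 0 ≤ σ) (d : X × ℝ → ℂ)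
      (lam δ : ℝ), 0 < lam → δ ≤ ε * lam → (W.prod (circle σ hσ)).NormLE d δ →
        W.StraighteningBounds σ hσ lam d (C * δ) (C * (δ / lam)) := by
  obtain ⟨C, hC, hone⟩ := exists_straighteningBounds_one (Γ := Γ) (X := X)
  obtain ⟨ε, hε, hball⟩ := Metric.eventually_nhds_iff.1 hone
  refine ⟨C, hC, ε / 2, half_pos hε, fun W σ hσ d lam δ hlam hδ hd => ?_⟩
  have hlam' : (lam : ℂ) ≠ 0 := Complex.ofReal_ne_zero.2 hlam.ne'
  have hsmall : dist (δ / lam) 0 < ε := by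
    rw [dist_zero_right, Real.norm_of_nonneg (div_nonneg hd.nonneg hlam.le)]
    exact ((div_le_iff₀ hlam).2 hδ).trans_lt (half_lt_self hε)
  have hd' : (W.prod (circle σ hσ)).NormLE (fun p => (lam : ℂ)⁻¹ * d p) (δ / lam) := by
    simpa [abs_of_pos hlam, div_eq_inv_mul] using hd.const_mul (lam : ℂ)⁻¹
  have h := (hball hsmall W σ hσ _ hd').mul hlam
  simp only [mul_inv_cancel_left₀ hlam', mul_one] at h
  rwa [mul_left_comm, mul_div_cancel₀ δ hlam.ne'] at h

end Straightening

end WeightedCharacters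

section Torus

lemma wnorm_eq_sum_of_subset (η : ℝ) {ℓ : ℕ →₀ ℤ} {s : Finset ℕ} (h : ℓ.support ⊆ s) :
    wnorm η ℓ = ∑ i ∈ s, ((i : ℝ) + 1) ^ η * |(ℓ i : ℝ)| :=
  Finset.sum_subset h fun i _ hi => by simp [Finsupp.notMem_support_iff.1 hi]

lemma wnorm_nonneg (η : ℝ) (ℓ : ℕ →₀ ℤ) : 0 ≤ wnorm η ℓ :=
  Finset.sum_nonneg fun i _ => by positivity

lemma wnorm_add_le (η : ℝ) (k l : ℕ →₀ ℤ) : wnorm η (k + l) ≤ wnorm η k + wnorm η l := by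
  rw [wnorm_eq_sum_of_subset η Finsupp.support_add,
    wnorm_eq_sum_of_subset η (s := k.support ∪ l.support) Finset.subset_union_left,
    wnorm_eq_sum_of_subset η (s := k.support ∪ l.support) Finset.subset_union_right,
    ← Finset.sum_add_distrib]
  refine Finset.sum_le_sum fun i _ => ?_
  rw [← mul_add, Finsupp.add_apply, Int.cast_add]
  gcongr
  exact abs_add_le _ _

lemma odot_add (φ : ℕ → ℝ) (k l : ℕ →₀ ℤ) : odot φ (k + l) = odot φ k + odot φ l :=
  Finsupp.sum_add_index' (h := fun i (n : ℤ) => φ i * (n : ℝ)) (by simp)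
    fun i m n => by rw [Int.cast_add, mul_add]

/-- The exponentials `exp (i ℓ·φ)` on the infinite torus `T^∞_ρ`, with weight `exp (ρ |ℓ|_η)`. -/
noncomputable def torus (η ρ : ℝ) (hρ : 0 ≤ ρ) : WeightedCharacters (ℕ →₀ ℤ) (ℕ → ℝ) where
  weight ℓ := Real.exp (ρ * wnorm η ℓ)
  char ℓ φ := Complex.exp (Complex.I * ((odot φ ℓ : ℝ) : ℂ))
  weight_zero := by simp [wnorm]
  one_le_weight ℓ := Real.one_le_exp (mul_nonneg hρ (wnorm_nonneg η ℓ))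
  weight_add_le k l := by
    rw [← Real.exp_add, ← mul_add]
    gcongr
    exact wnorm_add_le η k l
  char_zero φ := by simp [odot]
  char_add k l φ := by rw [← Complex.exp_add, odot_add, Complex.ofReal_add, mul_add]
  norm_char ℓ φ := Complex.norm_exp_I_mul_ofReal _

lemma torus_prod_circle_weight (η ρ : ℝ) (hρ : 0 ≤ ρ) (p : (ℕ →₀ ℤ) × ℤ) :
    ((torus η ρ hρ).prod (.circle ρ hρ)).weight p = wt η ρ p := by
  simp only [WeightedCharacters.prod, WeightedCharacters.circle, torus, wt, mul_add, Real.exp_add]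

lemma torus_prod_circle_char (η ρ : ℝ) (hρ : 0 ≤ ρ) (p : (ℕ →₀ ℤ) × ℤ) (φ : ℕ → ℝ) (x : ℝ) :
    ((torus η ρ hρ).prod (.circle ρ hρ)).char p (φ, x) =
      Complex.exp (Complex.I * ((odot φ p.1 + (p.2 : ℝ) * x : ℝ) : ℂ)) := by
  simp only [WeightedCharacters.prod, WeightedCharacters.circle, torus, ← Complex.exp_add]
  push_cast
  ring_nf

lemma normLE_realizeFn {η ρ δ : ℝ} (hρ : 0 ≤ ρ) {dc : (ℕ →₀ ℤ) × ℤ → ℂ}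
    (hs : Summable fun p => wt η ρ p * ‖dc p‖) (hδ : ∑' p, wt η ρ p * ‖dc p‖ ≤ δ) :
    ((torus η ρ hρ).prod (.circle ρ hρ)).NormLE (fun p => realizeFn dc p.1 p.2) δ := by
  simp only [← torus_prod_circle_weight η ρ hρ] at hs hδ
  refine ⟨dc, ⟨hs, fun p => ?_⟩, hδ⟩
  simp only [realizeFn, ← torus_prod_circle_char η ρ hρ]
  exact (WeightedCharacters.summable_mul_char (g := id) hs p).hasSum

theorem elimination_x_dependence_general {κ : ℝ} (hκ : 0 < κ) :
    ∃ C > (0 : ℝ), ∃ ε > (0 : ℝ),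
      ∀ (η ρ δ lam3 : ℝ) (dc : (ℕ →₀ ℤ) × ℤ → ℂ),
        0 ≤ ρ → κ ≤ lam3 → δ ≤ ε →
        Summable (fun p => wt η ρ p * ‖dc p‖) →
        (∑' p : (ℕ →₀ ℤ) × ℤ, wt η ρ p * ‖dc p‖) ≤ δ →
        ∃ (mc : (ℕ →₀ ℤ) → ℂ) (ac : (ℕ →₀ ℤ) × ℤ → ℂ),
          (∀ φ : ℕ → ℝ, m3fn lam3 dc φ =
            ∑' ℓ : ℕ →₀ ℤ, mc ℓ * Complex.exp (Complex.I * ((odot φ ℓ : ℝ) : ℂ))) ∧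
          (∀ ℓ, ac (ℓ, 0) = 0) ∧
          (∀ (φ : ℕ → ℝ) (x : ℝ),
            (∑' p : (ℕ →₀ ℤ) × ℤ, Complex.I * (p.2 : ℂ) * ac p *
                Complex.exp (Complex.I * ((odot φ p.1 + (p.2 : ℝ) * x : ℝ) : ℂ))) =
              m3fn lam3 dc φ ^ ((1 : ℂ) / 3) *
                ((lam3 : ℂ) + realizeFn dc φ x) ^ (-(1 / 3 : ℂ)) - 1) ∧
          (∀ (φ : ℕ → ℝ) (x : ℝ),
            ((lam3 : ℂ) + realizeFn dc φ x) *
                (1 + ∑' p : (ℕ →₀ ℤ) × ℤ, Complex.I * (p.2 : ℂ) * ac p *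
                  Complex.exp
                    (Complex.I * ((odot φ p.1 + (p.2 : ℝ) * x : ℝ) : ℂ))) ^ 3 =
              m3fn lam3 dc φ) ∧
          Summable (fun ℓ : ℕ →₀ ℤ => Real.exp (ρ * wnorm η ℓ) *
            ‖mc ℓ - (if ℓ = 0 then (lam3 : ℂ) else 0)‖) ∧
          (∑' ℓ : ℕ →₀ ℤ, Real.exp (ρ * wnorm η ℓ) *
              ‖mc ℓ - (if ℓ = 0 then (lam3 : ℂ) else 0)‖) ≤ C * δ ∧
          Summable (fun p => wt η ρ p * ‖ac p‖) ∧
          (∑' p : (ℕ →₀ ℤ) × ℤ, wt η ρ p * ‖ac p‖) ≤ C * δ := by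
  obtain ⟨C, hC, ε, hε, hbounds⟩ := WeightedCharacters.exists_straighteningBounds
    (Γ := ℕ →₀ ℤ) (X := ℕ → ℝ)
  refine ⟨C + C / κ, by positivity, min (ε * κ) (κ / 2), by positivity,
    fun η ρ δ lam3 dc hρ hlam hδ hs hsδ => ?_⟩
  have hd := normLE_realizeFn hρ hs hsδ
  have hδ0 := hd.nonneg
  have hδε : δ ≤ ε * lam3 := (hδ.trans (min_le_left _ _)).trans (by gcongr)
  have hδlam : δ < lam3 := by linarith [hδ.trans (min_le_right _ _)]
  have hne : ∀ φ x, (lam3 : ℂ) + realizeFn dc φ x ≠ 0 := fun φ x =>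
    ofReal_add_ne_zero_of_norm_lt ((hd.norm_apply_le (φ, x)).trans_lt hδlam :)
  obtain ⟨hm, hα, hmean⟩ := hbounds (torus η ρ hρ) ρ hρ _ lam3 δ (hκ.trans_le hlam) hδε hd
  obtain ⟨mc, hmc, hmcs, hmcδ⟩ := hm.exists_hasSum_of_sub_const
  obtain ⟨ac, hac0, hacs, hacδ, hac⟩ := hα.exists_antiderivative hmean
  simp only [torus_prod_circle_weight] at hacs hacδ
  have hac := fun φ x => by
    simpa only [torus_prod_circle_char] using (hac (φ, x)).tsum_eq
  refine ⟨mc, ac, fun φ => (hmc φ).tsum_eq.symm, hac0, hac, fun φ x => ?_, hmcs, hmcδ.trans ?_,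
    hacs, hacδ.trans ?_⟩
  · rw [hac φ x]
    exact WeightedCharacters.mul_one_add_shiftDeriv_cube
      (d := fun p => realizeFn dc p.1 p.2) (p := (φ, x)) (hne φ x)
  · gcongr
    exact le_add_of_nonneg_right (by positivity)
  · calc C * (δ / lam3) ≤ C * (δ / κ) := by gcongr
      _ = C / κ * δ := by ring
      _ ≤ (C + C / κ) * δ := by gcongr; exact le_add_of_nonneg_left hC.le

end Torus

/-- elimination of the x-dependence of the leading coefficient:
if `|λ₃−1| ≤ δ₀` is small and `|d₃|_ρ ≤ δ ≪ min(δ₀,ρ)`, then with `m₃` as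
above there is a zero x-average function `α` (given by Fourier coefficients
`ac`) with `α_x = m₃^{1/3}(λ₃+d₃)^{-1/3} − 1`, so that
`(λ₃+d₃)(1+α_x)³ = m₃` identically, and `|m₃−λ₃|_ρ ≤ Cδ`, `|α|_ρ ≤ Cδ`. -/
theorem elimination_x_dependence (η : ℝ) (hη : 0 < η) :
    ∃ C > (0 : ℝ), ∃ ε > (0 : ℝ),
      ∀ (ρ δ₀ δ lam3 : ℝ) (dc : (ℕ →₀ ℤ) × ℤ → ℂ),
        0 < ρ → 0 < δ₀ → δ₀ ≤ ε → 0 < δ → δ ≤ ε * min δ₀ ρ →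
        |lam3 - 1| ≤ δ₀ →
        Summable (fun p => wt η ρ p * ‖dc p‖) →
        (∑' p : (ℕ →₀ ℤ) × ℤ, wt η ρ p * ‖dc p‖) ≤ δ →
        ∃ (mc : (ℕ →₀ ℤ) → ℂ) (ac : (ℕ →₀ ℤ) × ℤ → ℂ),
          (∀ φ : ℕ → ℝ, m3fn lam3 dc φ =
            ∑' ℓ : ℕ →₀ ℤ, mc ℓ * Complex.exp (Complex.I * ((odot φ ℓ : ℝ) : ℂ))) ∧
          (∀ ℓ, ac (ℓ, 0) = 0) ∧
          (∀ (φ : ℕ → ℝ) (x : ℝ),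
            (∑' p : (ℕ →₀ ℤ) × ℤ, Complex.I * (p.2 : ℂ) * ac p *
                Complex.exp (Complex.I * ((odot φ p.1 + (p.2 : ℝ) * x : ℝ) : ℂ))) =
              m3fn lam3 dc φ ^ ((1 : ℂ) / 3) *
                ((lam3 : ℂ) + realizeFn dc φ x) ^ (-(1 / 3 : ℂ)) - 1) ∧
          (∀ (φ : ℕ → ℝ) (x : ℝ),
            ((lam3 : ℂ) + realizeFn dc φ x) *
                (1 + ∑' p : (ℕ →₀ ℤ) × ℤ, Complex.I * (p.2 : ℂ) * ac p *
                  Complex.exp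
                    (Complex.I * ((odot φ p.1 + (p.2 : ℝ) * x : ℝ) : ℂ))) ^ 3 =
              m3fn lam3 dc φ) ∧
          Summable (fun ℓ : ℕ →₀ ℤ => Real.exp (ρ * wnorm η ℓ) *
            ‖mc ℓ - (if ℓ = 0 then (lam3 : ℂ) else 0)‖) ∧
          (∑' ℓ : ℕ →₀ ℤ, Real.exp (ρ * wnorm η ℓ) *
              ‖mc ℓ - (if ℓ = 0 then (lam3 : ℂ) else 0)‖) ≤ C * δ ∧
          Summable (fun p => wt η ρ p * ‖ac p‖) ∧
          (∑' p : (ℕ →₀ ℤ) × ℤ, wt η ρ p * ‖ac p‖) ≤ C * δ := by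
  obtain ⟨C, hC, ε, hε, h⟩ := elimination_x_dependence_general one_half_pos
  refine ⟨C, hC, min ε (1 / 2), by positivity, fun ρ δ₀ δ lam3 dc hρ _ hδ₀ _ hδ hlam => ?_⟩
  have hδ₀' : δ₀ ≤ 1 / 2 := hδ₀.trans (min_le_right _ _)
  have hmin : min δ₀ ρ ≤ 1 := (min_le_left _ _).trans (by linarith)
  exact h η ρ δ lam3 dc hρ.le (by linarith [(abs_le.1 hlam).1])
    (hδ.trans ((mul_le_of_le_one_right (by positivity) hmin).trans (min_le_left _ _)))
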